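/- arXiv:1609.07209 — 3 statements merged into one kernel-verified Lean document; each statement's English description precedes it below -/
import Mathlib

section
/- Let F be a totally real number field of degree n over ℚ and let δ > 0. Then the family indexed by the totally positive units η of O_F, whose value at η is the product over those j ∈ {1,…,n} with σ_j(η) < 1 of σ_j(η)^δ, is summable; that is, ∑_{η ∈ O_F^{×+}} ∏_{j : σ_j(η) < 1} σ_j(η)^δ < ∞. -/
open NumberField

/-!
By the product formula, the logarithms of the normalised absolute values of a unit `η` at the
infinite places sum to `0`, so each of them is bounded in absolute value by the sum of their
negative parts. Hence the product of those `w(η)^δ` with `w(η) < 1` decays exponentially in the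
norm of the logarithmic embedding of `η`. That embedding has finite kernel and its image is a
lattice, over which `exp (-c‖z‖)` is summable.
-/

open Filter Real

theorem abs_le_sum_negPart_of_sum_eq_zero {ι α : Type*} [Fintype ι] [AddCommGroup α] [Lattice α]
    [IsOrderedAddMonoid α] {a : ι → α} (ha : ∑ i, a i = 0) (j : ι) : |a j| ≤ ∑ i, (a i)⁻ := by
  have sum_posPart : ∑ i, (a i)⁺ = ∑ i, (a i)⁻ := by
    rw [← sub_eq_zero, ← Finset.sum_sub_distrib, ← ha]
    exact Finset.sum_congr rfl fun i _ ↦ posPart_sub_negPart (a i)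
  refine abs_le'.mpr ⟨?_, (neg_le_negPart _).trans ?_⟩
  · calc a j ≤ (a j)⁺ := le_posPart _
      _ ≤ ∑ i, (a i)⁺ :=
        Finset.single_le_sum (f := fun i ↦ (a i)⁺) (fun i _ ↦ posPart_nonneg _) (Finset.mem_univ j)
      _ = ∑ i, (a i)⁻ := sum_posPart
  · exact Finset.single_le_sum (f := fun i ↦ (a i)⁻) (fun i _ ↦ negPart_nonneg _)
      (Finset.mem_univ j)

theorem ite_rpow_eq_exp_neg_mul_negPart_log {t : ℝ} (ht : 0 < t) (δ : ℝ) :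
    (if t < 1 then t ^ δ else 1) = exp (-δ * (log t)⁻) := by
  split_ifs with h
  · rw [negPart_of_nonpos (log_nonpos ht.le h.le), rpow_def_of_pos ht, neg_mul_neg, mul_comm]
  · rw [negPart_of_nonneg (log_nonneg (not_lt.mp h)), mul_zero, exp_zero]

theorem summable_comp_fst {ι κ M : Type*} [Finite κ] [AddCommMonoid M] [TopologicalSpace M]
    [ContinuousAdd M] {f : ι → M} (hf : Summable f) : Summable fun p : ι × κ ↦ f p.1 := by
  classical
  have := Fintype.ofFinite κ
  have summable_slice (k : κ) : Summable fun p : ι × κ ↦ if p.2 = k then f p.1 else 0 := by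
    refine ((Prod.mk_left_injective k).summable_iff fun p hp ↦ if_neg ?_).mp ?_
    · rintro rfl
      exact hp ⟨p.1, rfl⟩
    · simpa [Function.comp_def] using hf
  simpa using summable_sum (s := Finset.univ) fun k _ ↦ summable_slice k

theorem summable_comp_quotientMk {G M : Type*} [Group G] (N : Subgroup G) [Finite N]
    [AddCommMonoid M] [TopologicalSpace M] [ContinuousAdd M] {f : G ⧸ N → M} (hf : Summable f) :
    Summable fun g : G ↦ f g :=
  (N.groupEquivQuotientProdSubgroup.summable_iff (f := fun p : (G ⧸ N) × N ↦ f p.1)).mpr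
    (summable_comp_fst hf)

theorem summable_exp_neg_mul_norm {E : Type*} [NormedAddCommGroup E] [NormedSpace ℝ E]
    [FiniteDimensional ℝ E] (L : Submodule ℤ E) [DiscreteTopology L] {c : ℝ} (hc : 0 < c) :
    Summable fun z : L ↦ exp (-c * ‖z‖) := by
  have norm_tendsto : Tendsto (fun z : L ↦ ‖z‖) cofinite atTop :=
    (tendsto_norm_cocompact_atTop (E := E)).comp <|
      L.toAddSubgroup.tendsto_coe_cofinite_of_discrete
        (isDiscrete_iff_discreteTopology.mpr ‹DiscreteTopology L›)
  exact summable_of_isBigO (ZLattice.summable_norm_rpow L (-Module.finrank ℤ L - 1) (by linarith))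
    ((isLittleO_exp_neg_mul_rpow_atTop hc _).isBigO.comp_tendsto norm_tendsto)

theorem infinitePlace_mult_le_two {K : Type*} [Field K] (w : InfinitePlace K) : w.mult ≤ 2 := by
  unfold InfinitePlace.mult
  split_ifs <;> norm_num

section Units

variable {K : Type*} [Field K] [NumberField K]

open scoped Classical in
theorem summable_exp_neg_mul_norm_logEmbedding {c : ℝ} (hc : 0 < c) :
    Summable fun η : (𝓞 K)ˣ ↦ exp (-c * ‖Units.logEmbedding K (Additive.ofMul η)‖) := by
  have summable_quotient :
      Summable fun η : (𝓞 K)ˣ ⧸ Units.torsion K ↦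
        exp (-c * ‖Units.logEmbeddingEquiv K (Additive.ofMul η)‖) :=
    (Units.logEmbeddingEquiv K).toEquiv.summable_iff.mpr
      (summable_exp_neg_mul_norm (Units.unitLattice K) hc)
  simpa only [Submodule.coe_norm, Units.logEmbeddingEquiv_apply] using
    summable_comp_quotientMk (Units.torsion K) summable_quotient

open scoped Classical in
theorem norm_logEmbedding_le_two_mul_sum_negPart_log (η : (𝓞 K)ˣ) :
    ‖Units.logEmbedding K (Additive.ofMul η)‖ ≤
      2 * ∑ w : InfinitePlace K, (log (w (η : K)))⁻ := by
  have negPart_mult_mul_log (w : InfinitePlace K) :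
      (w.mult * log (w (η : K)))⁻ ≤ 2 * (log (w (η : K)))⁻ := by
    refine sup_le ?_ (by positivity)
    calc -(w.mult * log (w (η : K))) = w.mult * -log (w (η : K)) := by rw [mul_neg]
      _ ≤ w.mult * (log (w (η : K)))⁻ := by gcongr; exact neg_le_negPart _
      _ ≤ 2 * (log (w (η : K)))⁻ := by gcongr; exact_mod_cast infinitePlace_mult_le_two w
  refine (pi_norm_le_iff_of_nonneg (by positivity)).mpr fun w ↦ ?_
  rw [Units.dirichletUnitTheorem.logEmbedding_component, norm_eq_abs]
  calc |w.1.mult * log (w.1 (η : K))|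
      ≤ ∑ v : InfinitePlace K, (v.mult * log (v (η : K)))⁻ :=
        abs_le_sum_negPart_of_sum_eq_zero (Units.sum_mult_mul_log η) w.1
    _ ≤ ∑ v : InfinitePlace K, 2 * (log (v (η : K)))⁻ :=
        Finset.sum_le_sum fun v _ ↦ negPart_mult_mul_log v
    _ = 2 * ∑ v : InfinitePlace K, (log (v (η : K)))⁻ := (Finset.mul_sum ..).symm

theorem prod_ite_rpow_eq_exp_neg_mul_sum_negPart_log (η : (𝓞 K)ˣ) (δ : ℝ) :
    (∏ w : InfinitePlace K, if w (η : K) < 1 then w (η : K) ^ δ else 1) =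
      exp (-δ * ∑ w : InfinitePlace K, (log (w (η : K)))⁻) := by
  rw [Finset.mul_sum, exp_sum]
  exact Finset.prod_congr rfl fun w _ ↦
    ite_rpow_eq_exp_neg_mul_negPart_log (Units.pos_at_place η w) δ

variable (K) in
theorem summable_totally_positive_units_prod_general {δ : ℝ} (hδ : 0 < δ) :
    Summable fun η : (𝓞 K)ˣ ↦
      ∏ w : InfinitePlace K, if w (η : K) < 1 then w (η : K) ^ δ else 1 := by
  classical
  simp only [prod_ite_rpow_eq_exp_neg_mul_sum_negPart_log]
  refine (summable_exp_neg_mul_norm_logEmbedding (half_pos hδ)).of_nonneg_of_le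
    (fun η ↦ exp_nonneg _) fun η ↦ exp_le_exp.mpr ?_
  calc -δ * ∑ w : InfinitePlace K, (log (w (η : K)))⁻
      = -(δ / 2) * (2 * ∑ w : InfinitePlace K, (log (w (η : K)))⁻) := by ring
    _ ≤ -(δ / 2) * ‖Units.logEmbedding K (Additive.ofMul η)‖ :=
      mul_le_mul_of_nonpos_left (norm_logEmbedding_le_two_mul_sum_negPart_log η) (by linarith)

end Units

section TotallyReal

variable {K : Type*} [Field K] [IsTotallyReal K]

variable (K) in
/-- The correspondence between the real embeddings and the infinite places of a totally real field,
through which absolute values at places become absolute values of real conjugates. -/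
noncomputable def realEmbeddingEquivInfinitePlace : (K →+* ℝ) ≃ InfinitePlace K where
  toFun σ := InfinitePlace.mk (Complex.ofRealHom.comp σ)
  invFun w := InfinitePlace.embedding_of_isReal (IsTotallyReal.isReal w)
  left_inv σ := by
    ext x
    apply Complex.ofReal_injective
    rw [InfinitePlace.embedding_of_isReal_apply,
      InfinitePlace.embedding_mk_eq_of_isReal (IsTotallyReal.complexEmbedding_isReal _)]
    rfl
  right_inv w := by
    ext x
    rw [InfinitePlace.apply, ← InfinitePlace.norm_embedding_of_isReal (IsTotallyReal.isReal w)]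
    exact Complex.norm_real _

theorem realEmbeddingEquivInfinitePlace_apply (σ : K →+* ℝ) (x : K) :
    realEmbeddingEquivInfinitePlace K σ x = |σ x| := by
  simp [realEmbeddingEquivInfinitePlace, InfinitePlace.apply]

theorem prod_realEmbedding_eq_prod_infinitePlace [NumberField K] {M : Type*} [CommMonoid M]
    (f : ℝ → M) {x : K} (hx : ∀ σ : K →+* ℝ, 0 ≤ σ x) :
    ∏ σ : K →+* ℝ, f (σ x) = ∏ w : InfinitePlace K, f (w x) := by
  refine Fintype.prod_equiv (realEmbeddingEquivInfinitePlace K) _ _ fun σ ↦ ?_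
  rw [realEmbeddingEquivInfinitePlace_apply, abs_of_nonneg (hx σ)]

end TotallyReal

/-- Luo's unit-sum convergence: Let `F` be a totally real number field of
degree `n` over `ℚ` and let `δ > 0`. The family indexed by the totally positive units `η` of
`𝓞 F`, with value `∏_{j : σⱼ(η) < 1} σⱼ(η)^δ` (the product over the real embeddings `σⱼ` at
which `σⱼ(η) < 1`), is summable. -/
theorem summable_totally_positive_units_prod
    (F : Type*) [Field F] [NumberField F]
    (htotallyReal : ∀ v : NumberField.InfinitePlace F, v.IsReal)
    (δ : ℝ) (hδ : 0 < δ) :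
    Summable (fun η : {η : (𝓞 F)ˣ // ∀ σ : F →+* ℝ, 0 < σ ((η : 𝓞 F) : F)} =>
      ∏ σ : F →+* ℝ,
        if σ (((η : (𝓞 F)ˣ) : 𝓞 F) : F) < 1
          then (σ (((η : (𝓞 F)ˣ) : 𝓞 F) : F)) ^ δ
          else 1) := by
  have : IsTotallyReal F := ⟨htotallyReal⟩
  exact ((summable_totally_positive_units_prod_general F hδ).comp_injective
    Subtype.val_injective).congr fun η ↦ (prod_realEmbedding_eq_prod_infinitePlace
      (fun t ↦ if t < 1 then t ^ δ else 1) fun σ ↦ (η.2 σ).le).symm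
end

section
/- Let F be a totally real number field with ring of integers O_F and let δ ∈ (0, 1/2). There exists a constant C > 0 depending only on F and δ such that for all nonzero integral ideals 𝔪 and 𝔫 of O_F and every nonzero prime ideal 𝔮 of O_F, one has ∑_{𝔠} N(gcd(𝔪, 𝔫, 𝔠))^{1/2} · N(𝔠)^{−(3/2−δ)} ≤ C · N(gcd(𝔪, 𝔫, 𝔮))^{1/2} · N(𝔮)^{−(3/2−δ)} · N(gcd(𝔪, 𝔫))^δ, where the sum ranges over all nonzero integral ideals 𝔠 contained in 𝔮. -/
open NumberField

/-!
Since `(𝔤 + 𝔮)(𝔤 + 𝔟) ⊆ 𝔤 + 𝔮𝔟`, writing `𝔠 = 𝔮𝔟` pulls the contribution of `𝔮` out of the sum and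
reduces the claim to `𝔮 = 1`. There `N(𝔤 + 𝔟)` is at most both `N(𝔤)` and `N(𝔟)`, so the summand
is at most `h(N(𝔟))`, where `h(n) = min(n, N(𝔤))^{1/2} n^{-(3/2-δ)}` is antitone. As there are
`O(n)` nonzero ideals of norm at most `n`, summation by parts bounds `∑ h(N(𝔟))` by a multiple of
`∑ h(n)`, and comparison with an integral on either side of `n = N(𝔤)` finishes the proof.
-/

section SummationByParts

open Finset

variable {ι : Type*} {N : ι → ℕ} {u : Finset ι} {A : ℝ} {h : ℕ → ℝ}

-- The second summand on the left is the slack that makes the induction on `M` close.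
lemma sum_comp_add_le_mul_sum_of_card_le (hcard : ∀ n : ℕ, (#{i ∈ u | N i ≤ n} : ℝ) ≤ A * n)
    (hanti : AntitoneOn h (Set.Ici 1)) (M : ℕ) :
    ∑ i ∈ u with N i ≤ M, h (N i) + (A * M - #{i ∈ u | N i ≤ M}) * h (M + 1) ≤
      A * ∑ n ∈ Ioc 0 M, h n := by
  classical
  induction M with
  | zero =>
    have hempty : {i ∈ u | N i ≤ 0} = ∅ := by
      have hzero := hcard 0
      rw [Nat.cast_zero, mul_zero] at hzero
      exact card_eq_zero.1 (Nat.le_zero.1 (by exact_mod_cast hzero))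
    rw [hempty]
    simp
  | succ M ih =>
    have hunion : {i ∈ u | N i ≤ M + 1} = {i ∈ u | N i ≤ M} ∪ {i ∈ u | N i = M + 1} := by
      rw [← filter_or]
      exact filter_congr fun i _ => Nat.le_succ_iff
    have hdisj : Disjoint {i ∈ u | N i ≤ M} {i ∈ u | N i = M + 1} :=
      disjoint_filter.2 fun i _ _ => by lia
    have hfiber : ∑ i ∈ u with N i = M + 1, h (N i) = #{i ∈ u | N i = M + 1} * h (M + 1) := by
      rw [sum_congr rfl fun i hi => by rw [(mem_filter.1 hi).2], sum_const, nsmul_eq_mul]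
    have hcount := hcard (M + 1)
    have hstep : h (M + 2) ≤ h (M + 1) := hanti (by simp) (by simp) (by lia)
    have hslack := mul_le_mul_of_nonneg_left hstep (sub_nonneg.2 hcount)
    rw [hunion, card_union_of_disjoint hdisj] at hslack ⊢
    rw [sum_union hdisj, hfiber, sum_Ioc_succ_top (Nat.zero_le M)]
    push_cast at hslack ⊢
    linarith

lemma sum_comp_le_mul_sum_of_card_le (hcard : ∀ n : ℕ, (#{i ∈ u | N i ≤ n} : ℝ) ≤ A * n)
    (hanti : AntitoneOn h (Set.Ici 1)) (hnonneg : ∀ n, 0 ≤ h n) {M : ℕ} (hM : ∀ i ∈ u, N i ≤ M) :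
    ∑ i ∈ u, h (N i) ≤ A * ∑ n ∈ Ioc 0 M, h n := by
  have hle := sum_comp_add_le_mul_sum_of_card_le hcard hanti M
  have hslack := mul_nonneg (sub_nonneg.2 (hcard M)) (hnonneg (M + 1))
  rw [filter_true_of_mem hM] at hle hslack
  linarith

end SummationByParts

section PowerSums

open Finset

variable {t a δ : ℝ}

lemma antitoneOn_natCast_rpow_neg (ht : 0 ≤ t) :
    AntitoneOn (fun n : ℕ => (n : ℝ) ^ (-t)) (Set.Ici 1) := fun m hm n _ hmn =>
  Real.rpow_le_rpow_of_nonpos (by exact_mod_cast hm) (by exact_mod_cast hmn) (neg_nonpos.2 ht)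

lemma sum_Ioc_rpow_neg_le (ht : 0 ≤ t) (ht1 : t ≠ 1) {m M : ℕ} (hm : 0 < m) (hmM : m ≤ M) :
    ∑ n ∈ Ioc m M, (n : ℝ) ^ (-t) ≤ ((M : ℝ) ^ (1 - t) - (m : ℝ) ^ (1 - t)) / (1 - t) := by
  have hm' : (0 : ℝ) < m := by exact_mod_cast hm
  have hmM' : (m : ℝ) ≤ M := by exact_mod_cast hmM
  have hanti : AntitoneOn (fun x : ℝ => x ^ (-t)) (Set.Icc m M) := fun x hx y _ hxy =>
    Real.rpow_le_rpow_of_nonpos (hm'.trans_le hx.1) hxy (neg_nonpos.2 ht)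
  have hintegral : ∫ x in (m : ℝ)..M, x ^ (-t) =
      ((M : ℝ) ^ (1 - t) - (m : ℝ) ^ (1 - t)) / (1 - t) := by
    rw [integral_rpow (.inr ⟨by simpa using ht1, by simp [Set.uIcc_of_le hmM', hm.ne']⟩),
      neg_add_eq_sub]
  calc ∑ n ∈ Ioc m M, (n : ℝ) ^ (-t) = ∑ n ∈ Ico m M, ((n + 1 : ℕ) : ℝ) ^ (-t) := by
        rw [sum_Ico_add' (fun n : ℕ => (n : ℝ) ^ (-t)) m M 1, Ico_add_one_add_one_eq_Ioc]
    _ ≤ ∫ x in (m : ℝ)..M, x ^ (-t) := hanti.sum_le_integral_Ico hmM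
    _ = _ := hintegral

lemma sum_Ioc_zero_rpow_neg_le (ht : 0 ≤ t) (ht1 : t < 1) (M : ℕ) :
    ∑ n ∈ Ioc 0 M, (n : ℝ) ^ (-t) ≤ (M : ℝ) ^ (1 - t) / (1 - t) := by
  obtain rfl | hM := M.eq_zero_or_pos
  · simp [Real.zero_rpow (sub_pos.2 ht1).ne']
  have htail := sum_Ioc_rpow_neg_le ht ht1.ne one_pos hM
  have hone : 1 ≤ 1 / (1 - t) := one_le_one_div (sub_pos.2 ht1) (by linarith)
  rw [← sum_Ioc_consecutive _ zero_le_one hM]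
  rw [Nat.cast_one, Real.one_rpow, sub_div] at htail
  have hhead : ∑ n ∈ Ioc (0 : ℕ) 1, (n : ℝ) ^ (-t) = 1 := by simp
  linarith

lemma sum_Ioc_rpow_neg_le_of_one_lt (ht : 1 < t) {m M : ℕ} (hm : 0 < m) (hmM : m ≤ M) :
    ∑ n ∈ Ioc m M, (n : ℝ) ^ (-t) ≤ (m : ℝ) ^ (1 - t) / (t - 1) := by
  refine (sum_Ioc_rpow_neg_le (by linarith) ht.ne' hm hmM).trans ?_
  rw [← neg_div_neg_eq, neg_sub, neg_sub]
  have : 0 < t - 1 := sub_pos.2 ht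
  gcongr
  exact sub_le_self _ (by positivity)

/-- The function `n ↦ min(n, x)^a * n^{-(1 + a - δ)}` (for `a ≥ 0` and `n > 0`), which dominates the
sum over ideals. The power of `n` is distributed over the minimum because for `δ ≤ 1` both entries
are then antitone. -/
noncomputable def truncatedRpow (a δ : ℝ) (x n : ℕ) : ℝ :=
  min ((n : ℝ) ^ (-(1 - δ))) ((x : ℝ) ^ a * (n : ℝ) ^ (-(1 + a - δ)))

lemma truncatedRpow_nonneg (a δ : ℝ) (x n : ℕ) : 0 ≤ truncatedRpow a δ x n :=
  le_min (by positivity) (by positivity)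

lemma antitoneOn_truncatedRpow (hδ : δ ≤ 1) (hδa : δ ≤ 1 + a) (x : ℕ) :
    AntitoneOn (truncatedRpow a δ x) (Set.Ici 1) :=
  (antitoneOn_natCast_rpow_neg (by linarith)).min fun _ hm _ hn hmn =>
    mul_le_mul_of_nonneg_left (antitoneOn_natCast_rpow_neg (by linarith) hm hn hmn) (by positivity)

lemma rpow_mul_rpow_neg_le_truncatedRpow (ha : 0 ≤ a) {k x n : ℕ} (hn : 0 < n) (hkn : k ≤ n)
    (hkx : k ≤ x) : (k : ℝ) ^ a * (n : ℝ) ^ (-(1 + a - δ)) ≤ truncatedRpow a δ x n := by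
  have hn' : (0 : ℝ) < n := by exact_mod_cast hn
  refine le_min ?_ (by gcongr)
  calc (k : ℝ) ^ a * (n : ℝ) ^ (-(1 + a - δ)) ≤ (n : ℝ) ^ a * (n : ℝ) ^ (-(1 + a - δ)) := by gcongr
    _ = (n : ℝ) ^ (-(1 - δ)) := by
      rw [← Real.rpow_add hn']
      congr 1
      ring

lemma sum_Ioc_truncatedRpow_le (hδ0 : 0 < δ) (hδ1 : δ ≤ 1) (hδa : δ < a) {x M : ℕ} (hx : 0 < x)
    (hxM : x ≤ M) :
    ∑ n ∈ Ioc 0 M, truncatedRpow a δ x n ≤ (1 / δ + 1 / (a - δ)) * (x : ℝ) ^ δ := by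
  have hhead : ∑ n ∈ Ioc 0 x, truncatedRpow a δ x n ≤ (x : ℝ) ^ δ / δ := by
    refine (sum_le_sum fun n _ => min_le_left _ _).trans ?_
    simpa using sum_Ioc_zero_rpow_neg_le (t := 1 - δ) (by linarith) (by linarith) x
  have htail : ∑ n ∈ Ioc x M, truncatedRpow a δ x n ≤ (x : ℝ) ^ δ / (a - δ) :=
    calc ∑ n ∈ Ioc x M, truncatedRpow a δ x n
        ≤ ∑ n ∈ Ioc x M, (x : ℝ) ^ a * (n : ℝ) ^ (-(1 + a - δ)) :=
          sum_le_sum fun n _ => min_le_right _ _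
      _ = (x : ℝ) ^ a * ∑ n ∈ Ioc x M, (n : ℝ) ^ (-(1 + a - δ)) := (mul_sum ..).symm
      _ ≤ (x : ℝ) ^ a * ((x : ℝ) ^ (1 - (1 + a - δ)) / (1 + a - δ - 1)) := by
          gcongr
          exact sum_Ioc_rpow_neg_le_of_one_lt (by linarith) hx hxM
      _ = (x : ℝ) ^ δ / (a - δ) := by
          rw [← mul_div_assoc, ← Real.rpow_add (by exact_mod_cast hx)]
          ring_nf
  rw [← sum_Ioc_consecutive _ hx.le hxM]
  calc _ ≤ (x : ℝ) ^ δ / δ + (x : ℝ) ^ δ / (a - δ) := add_le_add hhead htail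
    _ = (1 / δ + 1 / (a - δ)) * (x : ℝ) ^ δ := by ring

lemma sum_truncatedRpow_comp_le {ι : Type*} {N : ι → ℕ} {u : Finset ι} {A : ℝ} (hA : 0 ≤ A)
    (hcard : ∀ n : ℕ, (#{i ∈ u | N i ≤ n} : ℝ) ≤ A * n) (hδ0 : 0 < δ) (hδ1 : δ ≤ 1) (hδa : δ < a)
    {x : ℕ} (hx : 0 < x) :
    ∑ i ∈ u, truncatedRpow a δ x (N i) ≤ A * (1 / δ + 1 / (a - δ)) * (x : ℝ) ^ δ := by
  have hM : ∀ i ∈ u, N i ≤ max x (u.sup N) := fun i hi => (le_sup hi).trans (le_max_right _ _)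
  calc ∑ i ∈ u, truncatedRpow a δ x (N i)
      ≤ A * ∑ n ∈ Ioc 0 (max x (u.sup N)), truncatedRpow a δ x n :=
        sum_comp_le_mul_sum_of_card_le (h := truncatedRpow a δ x) hcard
          (antitoneOn_truncatedRpow hδ1 (by linarith) x) (truncatedRpow_nonneg a δ x) hM
    _ ≤ A * ((1 / δ + 1 / (a - δ)) * (x : ℝ) ^ δ) := by
        gcongr
        exact sum_Ioc_truncatedRpow_le hδ0 hδ1 hδa hx (le_max_left _ _)
    _ = A * (1 / δ + 1 / (a - δ)) * (x : ℝ) ^ δ := (mul_assoc ..).symm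

end PowerSums

lemma sup_mul_sup_le_sup_mul {R : Type*} [CommSemiring R] (I J K : Ideal R) :
    (I ⊔ J) * (I ⊔ K) ≤ I ⊔ J * K := by
  rw [Ideal.sup_mul, Ideal.mul_sup J]
  exact sup_le (Ideal.mul_le_left.trans le_sup_left)
    (sup_le (Ideal.mul_le_right.trans le_sup_left) le_sup_right)

section AbsNorm

variable {R : Type*} [CommRing R] [IsDedekindDomain R] [Module.Free ℤ R] [Module.Finite ℤ R]

lemma absNorm_pos {I : Ideal R} (hI : I ≠ ⊥) : 0 < Ideal.absNorm I :=
  Nat.pos_of_ne_zero (Ideal.absNorm_eq_zero_iff.not.2 hI)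

lemma absNorm_le_absNorm_of_le {I J : Ideal R} (hI : I ≠ ⊥) (hIJ : I ≤ J) :
    Ideal.absNorm J ≤ Ideal.absNorm I :=
  Nat.le_of_dvd (absNorm_pos hI) (Ideal.absNorm_dvd_absNorm_of_le hIJ)

lemma absNorm_add_mul_le (I J K : Ideal R) :
    Ideal.absNorm (I + J * K) ≤ Ideal.absNorm (I + J) * Ideal.absNorm (I + K) := by
  obtain rfl | hI := eq_or_ne I ⊥
  · simp
  rw [← map_mul]
  exact absNorm_le_absNorm_of_le
    (mul_ne_zero (ne_bot_of_le_ne_bot hI le_sup_left) (ne_bot_of_le_ne_bot hI le_sup_left))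
    (sup_mul_sup_le_sup_mul I J K)

lemma absNorm_add_mul_rpow_mul_le (I J K : Ideal R) {a : ℝ} (ha : 0 ≤ a) (s : ℝ) :
    (Ideal.absNorm (I + J * K) : ℝ) ^ a * (Ideal.absNorm (J * K) : ℝ) ^ s ≤
      (Ideal.absNorm (I + J) : ℝ) ^ a * (Ideal.absNorm J : ℝ) ^ s *
        ((Ideal.absNorm (I + K) : ℝ) ^ a * (Ideal.absNorm K : ℝ) ^ s) := by
  have hgcd : (Ideal.absNorm (I + J * K) : ℝ) ≤ Ideal.absNorm (I + J) * Ideal.absNorm (I + K) := by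
    exact_mod_cast absNorm_add_mul_le I J K
  calc (Ideal.absNorm (I + J * K) : ℝ) ^ a * (Ideal.absNorm (J * K) : ℝ) ^ s
      ≤ (Ideal.absNorm (I + J) * Ideal.absNorm (I + K) : ℝ) ^ a *
          (Ideal.absNorm J * Ideal.absNorm K : ℝ) ^ s := by
        rw [map_mul, Nat.cast_mul]
        gcongr
    _ = _ := by
        rw [Real.mul_rpow (by positivity) (by positivity),
          Real.mul_rpow (by positivity) (by positivity)]
        ring

end AbsNorm

/-- Multiplication by `𝔮`, as a parametrization of the nonzero ideals contained in `𝔮` by all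
nonzero ideals; it substitutes `𝔠 = 𝔮𝔟` in the sum. -/
noncomputable def mulLeftEquiv {R : Type*} [CommRing R] [IsDedekindDomain R] {𝔮 : Ideal R}
    (h𝔮 : 𝔮 ≠ ⊥) : {𝔟 : Ideal R // 𝔟 ≠ ⊥} ≃ {𝔠 : Ideal R // 𝔠 ≠ ⊥ ∧ 𝔠 ≤ 𝔮} :=
  Equiv.ofBijective (fun 𝔟 => ⟨𝔮 * 𝔟, mul_ne_zero h𝔮 𝔟.2, Ideal.mul_le_left⟩) <| by
    constructor
    · intro 𝔟 𝔟' h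
      exact Subtype.ext (mul_left_cancel₀ h𝔮 (congrArg Subtype.val h))
    · rintro ⟨𝔠, h𝔠, h𝔠𝔮⟩
      obtain ⟨𝔟, rfl⟩ := Ideal.dvd_iff_le.2 h𝔠𝔮
      exact ⟨⟨𝔟, right_ne_zero_of_mul h𝔠⟩, rfl⟩

section IdealSums

variable (F : Type*) [Field F] [NumberField F]

lemma exists_card_absNorm_le_mul :
    ∃ A > (0 : ℝ), ∀ (u : Finset {𝔟 : Ideal (𝓞 F) // 𝔟 ≠ ⊥}) (n : ℕ),
      (({𝔟 ∈ u | Ideal.absNorm 𝔟.1 ≤ n} : Finset _).card : ℝ) ≤ A * n := by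
  obtain ⟨A, hA⟩ := ((NumberField.Ideal.tendsto_norm_le_div_atTop F).comp
    tendsto_natCast_atTop_atTop).bddAbove_range
  refine ⟨max A 1, by positivity, fun u n => ?_⟩
  obtain rfl | hn := n.eq_zero_or_pos
  · simp +contextual [Ideal.absNorm_eq_zero_iff]
  have hn' : (0 : ℝ) < n := by exact_mod_cast hn
  have hfinite : Finite {𝔟 : Ideal (𝓞 F) // Ideal.absNorm 𝔟 ≤ n} :=
    Ideal.finite_setOfPred_absNorm_le n
  have hcard : ({𝔟 ∈ u | Ideal.absNorm 𝔟.1 ≤ n} : Finset _).card ≤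
      Nat.card {𝔟 : Ideal (𝓞 F) // Ideal.absNorm 𝔟 ≤ n} := by
    rw [← Nat.card_eq_finsetCard]
    exact Nat.card_le_card_of_injective (fun 𝔟 => ⟨𝔟.1.1, (Finset.mem_filter.1 𝔟.2).2⟩)
      fun 𝔟 𝔟' h => Subtype.ext (Subtype.ext (by simpa using h))
  have hratio : (Nat.card {𝔟 : Ideal (𝓞 F) // Ideal.absNorm 𝔟 ≤ n} : ℝ) / n ≤ A := by
    simpa using hA ⟨n, rfl⟩
  calc _ ≤ (Nat.card {𝔟 : Ideal (𝓞 F) // Ideal.absNorm 𝔟 ≤ n} : ℝ) := by exact_mod_cast hcard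
    _ ≤ A * n := (div_le_iff₀ hn').1 hratio
    _ ≤ max A 1 * n := by gcongr; exact le_max_left _ _

lemma exists_tsum_absNorm_add_rpow_le {a δ : ℝ} (hδ0 : 0 < δ) (hδ1 : δ ≤ 1) (hδa : δ < a) :
    ∃ C > (0 : ℝ), ∀ 𝔤 : Ideal (𝓞 F), 𝔤 ≠ ⊥ →
      Summable (fun 𝔟 : {𝔟 : Ideal (𝓞 F) // 𝔟 ≠ ⊥} =>
        (Ideal.absNorm (𝔤 + 𝔟.1) : ℝ) ^ a * (Ideal.absNorm 𝔟.1 : ℝ) ^ (-(1 + a - δ))) ∧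
      ∑' 𝔟 : {𝔟 : Ideal (𝓞 F) // 𝔟 ≠ ⊥},
          (Ideal.absNorm (𝔤 + 𝔟.1) : ℝ) ^ a * (Ideal.absNorm 𝔟.1 : ℝ) ^ (-(1 + a - δ)) ≤
        C * (Ideal.absNorm 𝔤 : ℝ) ^ δ := by
  obtain ⟨A, hA, hcard⟩ := exists_card_absNorm_le_mul F
  have hconst : 0 < 1 / δ + 1 / (a - δ) :=
    add_pos (one_div_pos.2 hδ0) (one_div_pos.2 (sub_pos.2 hδa))
  refine ⟨A * (1 / δ + 1 / (a - δ)), mul_pos hA hconst, fun 𝔤 h𝔤 => ?_⟩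
  have hterm (𝔟 : {𝔟 : Ideal (𝓞 F) // 𝔟 ≠ ⊥}) :
      (Ideal.absNorm (𝔤 + 𝔟.1) : ℝ) ^ a * (Ideal.absNorm 𝔟.1 : ℝ) ^ (-(1 + a - δ)) ≤
        truncatedRpow a δ (Ideal.absNorm 𝔤) (Ideal.absNorm 𝔟.1) :=
    rpow_mul_rpow_neg_le_truncatedRpow (hδ0.trans hδa).le (absNorm_pos 𝔟.2)
      (absNorm_le_absNorm_of_le 𝔟.2 le_sup_right) (absNorm_le_absNorm_of_le h𝔤 le_sup_left)
  have hsum (u : Finset {𝔟 : Ideal (𝓞 F) // 𝔟 ≠ ⊥}) := (Finset.sum_le_sum fun 𝔟 _ => hterm 𝔟).trans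
    (sum_truncatedRpow_comp_le hA.le (hcard u) hδ0 hδ1 hδa (absNorm_pos h𝔤))
  exact ⟨summable_of_sum_le (fun 𝔟 => by positivity) hsum,
    Real.tsum_le_of_sum_le (fun 𝔟 => by positivity) hsum⟩

theorem sum_over_ideals_in_q_gcd_bound_general {a δ : ℝ} (hδ0 : 0 < δ) (hδ1 : δ ≤ 1)
    (hδa : δ < a) :
    ∃ C > (0 : ℝ), ∀ 𝔤 𝔮 : Ideal (𝓞 F), 𝔤 ≠ ⊥ → 𝔮 ≠ ⊥ →
      Summable (fun 𝔠 : {𝔠 : Ideal (𝓞 F) // 𝔠 ≠ ⊥ ∧ 𝔠 ≤ 𝔮} =>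
        (Ideal.absNorm (𝔤 + 𝔠.1) : ℝ) ^ a * (Ideal.absNorm 𝔠.1 : ℝ) ^ (-(1 + a - δ))) ∧
      ∑' 𝔠 : {𝔠 : Ideal (𝓞 F) // 𝔠 ≠ ⊥ ∧ 𝔠 ≤ 𝔮},
          (Ideal.absNorm (𝔤 + 𝔠.1) : ℝ) ^ a * (Ideal.absNorm 𝔠.1 : ℝ) ^ (-(1 + a - δ)) ≤
        C * (Ideal.absNorm (𝔤 + 𝔮) : ℝ) ^ a * (Ideal.absNorm 𝔮 : ℝ) ^ (-(1 + a - δ)) *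
          (Ideal.absNorm 𝔤 : ℝ) ^ δ := by
  obtain ⟨C, hC, hbound⟩ := exists_tsum_absNorm_add_rpow_le F hδ0 hδ1 hδa
  refine ⟨C, hC, fun 𝔤 𝔮 h𝔤 h𝔮 => ?_⟩
  obtain ⟨hsummable, htsum⟩ := hbound 𝔤 h𝔤
  set B : ℝ := (Ideal.absNorm (𝔤 + 𝔮) : ℝ) ^ a * (Ideal.absNorm 𝔮 : ℝ) ^ (-(1 + a - δ)) with hB
  let f (𝔠 : Ideal (𝓞 F)) : ℝ :=
    (Ideal.absNorm (𝔤 + 𝔠) : ℝ) ^ a * (Ideal.absNorm 𝔠 : ℝ) ^ (-(1 + a - δ))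
  have hterm (𝔟 : {𝔟 : Ideal (𝓞 F) // 𝔟 ≠ ⊥}) : f (mulLeftEquiv h𝔮 𝔟) ≤ B * f 𝔟 :=
    absNorm_add_mul_rpow_mul_le 𝔤 𝔮 𝔟 (hδ0.trans hδa).le _
  have hsummable𝔮 := (hsummable.mul_left B).of_nonneg_of_le (fun 𝔟 => by positivity) hterm
  refine ⟨(mulLeftEquiv h𝔮).summable_iff.1 hsummable𝔮, ?_⟩
  calc ∑' 𝔠 : {𝔠 : Ideal (𝓞 F) // 𝔠 ≠ ⊥ ∧ 𝔠 ≤ 𝔮}, f 𝔠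
      = ∑' 𝔟 : {𝔟 : Ideal (𝓞 F) // 𝔟 ≠ ⊥}, f (mulLeftEquiv h𝔮 𝔟) :=
        ((mulLeftEquiv h𝔮).tsum_eq _).symm
    _ ≤ ∑' 𝔟 : {𝔟 : Ideal (𝓞 F) // 𝔟 ≠ ⊥}, B * f 𝔟 :=
        hsummable𝔮.tsum_le_tsum hterm (hsummable.mul_left B)
    _ = B * ∑' 𝔟 : {𝔟 : Ideal (𝓞 F) // 𝔟 ≠ ⊥}, f 𝔟 := tsum_mul_left
    _ ≤ B * (C * (Ideal.absNorm 𝔤 : ℝ) ^ δ) := by gcongr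
    _ = _ := by rw [hB]; ring

end IdealSums

/-- Trotabas, p. 228: Let `F` be a totally real number field with ring of
integers `𝓞 F` and let `δ ∈ (0, 1/2)`. There is a constant `C > 0` depending only on `F` and
`δ` such that for all nonzero integral ideals `𝔪, 𝔫` and every nonzero prime ideal `𝔮`,
`∑_{𝔠 ⊆ 𝔮, 𝔠 ≠ 0} N(𝔪+𝔫+𝔠)^(1/2) * N(𝔠)^(-(3/2-δ))
   ≤ C * N(𝔪+𝔫+𝔮)^(1/2) * N(𝔮)^(-(3/2-δ)) * N(𝔪+𝔫)^δ`,
where the gcd of ideals is their sum. -/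
theorem sum_over_ideals_in_q_gcd_bound
    (F : Type*) [Field F] [NumberField F]
    (htotallyReal : ∀ v : NumberField.InfinitePlace F, v.IsReal)
    (δ : ℝ) (hδ0 : 0 < δ) (hδ1 : δ < 1 / 2) :
    ∃ C > (0 : ℝ), ∀ 𝔪 𝔫 𝔮 : Ideal (𝓞 F), 𝔪 ≠ ⊥ → 𝔫 ≠ ⊥ → 𝔮.IsPrime → 𝔮 ≠ ⊥ →
      Summable (fun 𝔠 : {𝔠 : Ideal (𝓞 F) // 𝔠 ≠ ⊥ ∧ 𝔠 ≤ 𝔮} =>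
        (Ideal.absNorm (𝔪 + 𝔫 + (𝔠 : Ideal (𝓞 F))) : ℝ) ^ ((1 : ℝ) / 2) *
          (Ideal.absNorm (𝔠 : Ideal (𝓞 F)) : ℝ) ^ (-(3 / 2 - δ))) ∧
      (∑' 𝔠 : {𝔠 : Ideal (𝓞 F) // 𝔠 ≠ ⊥ ∧ 𝔠 ≤ 𝔮},
          (Ideal.absNorm (𝔪 + 𝔫 + (𝔠 : Ideal (𝓞 F))) : ℝ) ^ ((1 : ℝ) / 2) *
            (Ideal.absNorm (𝔠 : Ideal (𝓞 F)) : ℝ) ^ (-(3 / 2 - δ)))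
        ≤ C * (Ideal.absNorm (𝔪 + 𝔫 + 𝔮) : ℝ) ^ ((1 : ℝ) / 2) *
            (Ideal.absNorm 𝔮 : ℝ) ^ (-(3 / 2 - δ)) *
            (Ideal.absNorm (𝔪 + 𝔫) : ℝ) ^ δ := by
  obtain ⟨C, hC, hbound⟩ :=
    sum_over_ideals_in_q_gcd_bound_general F (a := 1 / 2) hδ0 (by linarith) hδ1
  rw [show (1 : ℝ) + 1 / 2 - δ = 3 / 2 - δ by ring] at hbound
  exact ⟨C, hC, fun 𝔪 𝔫 𝔮 h𝔪 _ _ h𝔮 => hbound (𝔪 + 𝔫) 𝔮 (ne_bot_of_le_ne_bot h𝔪 le_sup_left) h𝔮⟩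
end

section
/- Let Λ : ℂ → ℂ be an entire function satisfying the functional equation Λ(s) = Λ(1 − s) for all s ∈ ℂ. Let G be a function holomorphic on an open set containing the strip {u ∈ ℂ : |Re(u)| ≤ 3/2} and bounded there, with G(−u) = G(u) and G(0) = 1. Fix s₀ ∈ ℂ and X > 0, and assume: (i) for σ = 3/2 and σ = −3/2, the functions t ↦ Λ(s₀ + σ + it)·G(σ + it)/(σ + it) and t ↦ Λ(1 − s₀ + σ + it)·G(σ + it)/(σ + it) are Lebesgue integrable on ℝ; (ii) sup_{σ ∈ [−3/2, 3/2]} |Λ(s₀ + σ + it)·G(σ + it)| → 0 as |t| → ∞. Then Λ(s₀) = I(s₀, X) + I(1 − s₀, X^{−1}), where for s ∈ ℂ and Y > 0 one defines I(s, Y) = (1/(2π)) ∫_ℝ Y^{3/2+it} · Λ(s + 3/2 + it) · G(3/2 + it)/(3/2 + it) dt. -/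
open Complex MeasureTheory Filter

/-- The vertical-line integral
`I(s, Y) = (1/(2πi)) ∫_{Re u = 3/2} Y^u Λ(s+u) G(u) du/u
         = (1/(2π)) ∫_ℝ Y^{3/2+it} Λ(s + 3/2 + it) G(3/2+it)/(3/2+it) dt`. -/
noncomputable def verticalLineIntegral (Λ G : ℂ → ℂ) (s : ℂ) (Y : ℝ) : ℂ :=
  (1 / (2 * Real.pi) : ℂ) * ∫ t : ℝ,
    (Y : ℂ) ^ ((3 : ℂ) / 2 + t * Complex.I) *
      Λ (s + 3 / 2 + t * Complex.I) *
      G ((3 : ℂ) / 2 + t * Complex.I) / ((3 : ℂ) / 2 + t * Complex.I)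

/-!
`I(s, Y)` is the inverse Mellin transform of `Λ(s + u) G(u) / u` at `Y⁻¹`. Moving the line of
integration from `Re u = c` to `Re u = -c` crosses only the simple pole at `u = 0`, whose residue
is `Λ(s₀)`; the functional equation and `u ↦ -u` turn the integral over the left line into the dual
term. The residue is isolated by writing `f(u) / u = dslope f 0 u + f(0) / u`: Cauchy's theorem on
rectangles applies to the first summand, and the vertical integrals of `1 / u` are arctangents.
-/

open Set Topology Asymptotics ComplexConjugate
open scoped Real

/-- The filter describing `|Im u| → ∞` inside the closed vertical strip `a ≤ Re u ≤ b`. -/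
abbrev stripAtInfty (a b : ℝ) : Filter ℂ := comap im (cocompact ℝ) ⊓ 𝓟 (re ⁻¹' Icc a b)

theorem stripAtInfty_le_cocompact (a b : ℝ) : stripAtInfty a b ≤ cocompact ℂ :=
  inf_le_left.trans (comap_cocompact_le continuous_im)

theorem continuous_vertical_line {α : Type*} [TopologicalSpace α] {f : ℂ → α} {a b x : ℝ}
    (hf : ContinuousOn f (re ⁻¹' Icc a b)) (hx : x ∈ Icc a b) :
    Continuous fun t : ℝ ↦ f (x + t * I) :=
  hf.comp_continuous (by fun_prop) fun t ↦ by simpa using hx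

section Strip

variable {E : Type*} [NormedAddCommGroup E] {f : ℂ → E} {a b : ℝ}

theorem tendsto_stripAtInfty_of_tendsto_biSup (hf : ContinuousOn f (re ⁻¹' Icc a b))
    (hlim : Tendsto (fun t : ℝ ↦ ⨆ σ ∈ Icc a b, ‖f (σ + t * I)‖) (cocompact ℝ) (𝓝 0)) :
    Tendsto f (stripAtInfty a b) (𝓝 0) := by
  have hle : ∀ u ∈ re ⁻¹' Icc a b, ‖f u‖ ≤ ⨆ σ ∈ Icc a b, ‖f (σ + u.im * I)‖ := by
    intro u hu
    have hcont : ContinuousOn (fun σ : ℝ ↦ f (σ + u.im * I)) (Icc a b) :=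
      hf.comp (by fun_prop) fun σ hσ ↦ by simpa using hσ
    obtain ⟨B, hB⟩ := isCompact_Icc.exists_bound_of_continuousOn hcont
    have hbdd : BddAbove (⋃ σ, range fun _ : σ ∈ Icc a b ↦ ‖f (σ + u.im * I)‖) := by
      refine ⟨B, ?_⟩
      rintro _ ⟨_, ⟨σ, rfl⟩, hσ, rfl⟩
      exact hB σ hσ
    simpa only [re_add_im] using
      le_ciSup₂ (f := fun (σ : ℝ) (_ : σ ∈ Icc a b) ↦ ‖f (σ + u.im * I)‖) hbdd u.re hu
  refine squeeze_zero_norm' ?_ (hlim.comp (tendsto_comap.mono_left inf_le_left))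
  exact eventually_inf_principal.2 (Eventually.of_forall hle)

theorem isLittleO_const_id_stripAtInfty (y : E) : (fun _ ↦ y) =o[stripAtInfty a b] id :=
  isLittleO_const_left.2 <| .inr <|
    (tendsto_norm_cocompact_atTop (E := ℂ)).mono_left (stripAtInfty_le_cocompact a b)

theorem isLittleO_id_of_tendsto_zero (hlim : Tendsto f (stripAtInfty a b) (𝓝 0)) :
    f =o[stripAtInfty a b] id :=
  ((isLittleO_one_iff ℂ).2 hlim).trans (isLittleO_const_id_stripAtInfty 1)

variable [NormedSpace ℂ E]

theorem tendsto_integral_horizontal_zero (hab : a ≤ b)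
    (hlim : Tendsto f (stripAtInfty a b) (𝓝 0)) :
    Tendsto (fun t : ℝ ↦ ∫ x in a..b, f (x + t * I)) (cocompact ℝ) (𝓝 0) := by
  rw [Metric.tendsto_nhds]
  intro ε hε
  have hδ : 0 < ε / (|b - a| + 1) := by positivity
  have hsmall := eventually_comap.1 (eventually_inf_principal.1 (Metric.tendsto_nhds.1 hlim _ hδ))
  filter_upwards [hsmall] with t ht
  have hbound : ∀ x ∈ uIoc a b, ‖f (x + t * I)‖ ≤ ε / (|b - a| + 1) := by
    intro x hx
    rw [uIoc_of_le hab] at hx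
    simpa using (ht (x + t * I) (by simp) (by simpa using Ioc_subset_Icc_self hx)).le
  calc dist (∫ x in a..b, f (x + t * I)) 0
      = ‖∫ x in a..b, f (x + t * I)‖ := dist_zero_right _
    _ ≤ ε / (|b - a| + 1) * |b - a| := intervalIntegral.norm_integral_le_of_norm_le_const hbound
    _ < ε / (|b - a| + 1) * (|b - a| + 1) := by gcongr; linarith
    _ = ε := by field_simp

theorem tendsto_integral_vertical_sub_zero [CompleteSpace E] (hab : a < b)
    (hf : DiffContOnCl ℂ f (re ⁻¹' Ioo a b)) (hlim : Tendsto f (stripAtInfty a b) (𝓝 0)) :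
    Tendsto (fun T : ℝ ↦ (∫ t in -T..T, f (b + t * I)) - ∫ t in -T..T, f (a + t * I))
      atTop (𝓝 0) := by
  have hcauchy (T : ℝ) : (∫ t in -T..T, f (b + t * I)) - ∫ t in -T..T, f (a + t * I) =
      I • ((∫ x in a..b, f (x + (-T : ℝ) * I)) - ∫ x in a..b, f (x + T * I)) := by
    have hrect := integral_boundary_rect_eq_zero_of_continuousOn_of_differentiableOn f
      ⟨a, -T⟩ ⟨b, T⟩
      (hf.continuousOn.mono fun u hu ↦ by
        rw [closure_preimage_re, closure_Ioo hab.ne]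
        simpa only [uIcc_of_le hab.le] using hu.1)
      (hf.differentiableOn.mono fun u hu ↦ by
        simpa only [min_eq_left hab.le, max_eq_right hab.le] using hu.1)
    rw [add_sub_assoc, ← smul_sub, add_eq_zero_iff_eq_neg] at hrect
    rw [hrect, smul_neg, smul_smul, I_mul_I, neg_one_smul, neg_neg]
  have hhor := tendsto_integral_horizontal_zero hab.le hlim
  rw [cocompact_eq_atBot_atTop, tendsto_sup] at hhor
  simp_rw [hcauchy]
  simpa using ((hhor.1.comp tendsto_neg_atTop_atBot).sub hhor.2).const_smul I

end Strip

section Residue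

theorem add_mul_I_ne_zero {x : ℝ} (hx : x ≠ 0) (t : ℝ) : (x + t * I : ℂ) ≠ 0 :=
  fun h ↦ hx (by simpa using congrArg re h)

theorem continuous_vertical_line_inv {x : ℝ} (hx : x ≠ 0) :
    Continuous fun t : ℝ ↦ (x + t * I : ℂ)⁻¹ :=
  Continuous.inv₀ (by fun_prop) (add_mul_I_ne_zero hx)

theorem integral_vertical_inv {x : ℝ} (hx : x ≠ 0) (T : ℝ) :
    ∫ t in -T..T, (x + t * I : ℂ)⁻¹ = ((2 * Real.arctan (T / x) : ℝ) : ℂ) := by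
  have hcont := continuous_vertical_line_inv hx
  have hconj : Continuous fun t : ℝ ↦ conj (x + t * I : ℂ)⁻¹ := continuous_conj.comp hcont
  have hre (t : ℝ) : ((x + t * I : ℂ)⁻¹).re = x⁻¹ * (1 / (1 + (t / x) ^ 2)) := by
    rw [inv_re, normSq_add_mul_I]
    simp only [add_re, ofReal_re, mul_re, I_re, mul_zero, ofReal_im, I_im, mul_one, sub_self,
      add_zero]
    field_simp
  have harctan : ∫ t in -T..T, ((x + t * I : ℂ)⁻¹).re = 2 * Real.arctan (T / x) := by
    simp_rw [hre]
    rw [intervalIntegral.integral_const_mul,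
      intervalIntegral.integral_comp_div (fun t ↦ 1 / (1 + t ^ 2)) hx,
      integral_one_div_one_add_sq, neg_div, Real.arctan_neg, smul_eq_mul, inv_mul_cancel_left₀ hx]
    ring
  have hreflect : ∫ t in -T..T, conj (x + t * I : ℂ)⁻¹ = ∫ t in -T..T, (x + t * I : ℂ)⁻¹ := by
    simpa using
      intervalIntegral.integral_comp_neg (a := -T) (b := T) fun t : ℝ ↦ (x + t * I : ℂ)⁻¹
  refine mul_left_cancel₀ (two_ne_zero (α := ℂ)) ?_
  calc 2 * ∫ t in -T..T, (x + t * I : ℂ)⁻¹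
      = ∫ t in -T..T, ((x + t * I : ℂ)⁻¹ + conj (x + t * I : ℂ)⁻¹) := by
        rw [intervalIntegral.integral_add (hcont.intervalIntegrable _ _)
          (hconj.intervalIntegrable _ _), hreflect, two_mul]
    _ = ∫ t in -T..T, ((2 * ((x + t * I : ℂ)⁻¹).re : ℝ) : ℂ) := by simp_rw [add_conj]
    _ = 2 * ((2 * Real.arctan (T / x) : ℝ) : ℂ) := by
        rw [intervalIntegral.integral_ofReal, intervalIntegral.integral_const_mul, harctan,
          ofReal_mul, ofReal_ofNat]

theorem tendsto_integral_vertical_inv_of_pos {x : ℝ} (hx : 0 < x) :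
    Tendsto (fun T : ℝ ↦ ∫ t in -T..T, (x + t * I : ℂ)⁻¹) atTop (𝓝 π) := by
  have harctan : Tendsto (fun T ↦ 2 * Real.arctan (T / x)) atTop (𝓝 π) := by
    simpa [mul_div_cancel₀] using ((Real.tendsto_arctan_atTop.mono_right nhdsWithin_le_nhds).comp
      (tendsto_id.atTop_div_const hx)).const_mul 2
  simp_rw [integral_vertical_inv hx.ne']
  exact (continuous_ofReal.tendsto _).comp harctan

theorem tendsto_integral_vertical_inv_of_neg {x : ℝ} (hx : x < 0) :
    Tendsto (fun T : ℝ ↦ ∫ t in -T..T, (x + t * I : ℂ)⁻¹) atTop (𝓝 (-π)) := by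
  refine (tendsto_integral_vertical_inv_of_pos (neg_pos.2 hx)).neg.congr fun T ↦ ?_
  rw [integral_vertical_inv hx.ne, integral_vertical_inv (neg_pos.2 hx).ne', div_neg,
    Real.arctan_neg, mul_neg, ofReal_neg, neg_neg]

variable {E : Type*} [NormedAddCommGroup E] [NormedSpace ℂ E] {f : ℂ → E} {a b : ℝ}

theorem tendsto_dslope_stripAtInfty (hlim : f =o[stripAtInfty a b] id) :
    Tendsto (dslope f 0) (stripAtInfty a b) (𝓝 0) := by
  have hne : ∀ᶠ u in stripAtInfty a b, u ≠ 0 :=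
    stripAtInfty_le_cocompact a b (isCompact_singleton (x := (0 : ℂ))).compl_mem_cocompact
  have hquot : (fun u : ℂ ↦ u⁻¹ • (f u - f 0)) =o[stripAtInfty a b] fun u : ℂ ↦ u⁻¹ • u :=
    (isBigO_refl _ _).smul_isLittleO (hlim.sub (isLittleO_const_id_stripAtInfty (f 0)))
  refine (isLittleO_one_iff ℂ).1 (hquot.congr' ?_ ?_)
  · filter_upwards [hne] with u hu
    rw [dslope_of_ne _ hu, slope_def_module, sub_zero]
  · filter_upwards [hne] with u hu
    exact inv_mul_cancel₀ hu

theorem diffContOnCl_dslope_strip [CompleteSpace E] (hf : DiffContOnCl ℂ f (re ⁻¹' Ioo a b))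
    (ha : a < 0) (hb : 0 < b) : DiffContOnCl ℂ (dslope f 0) (re ⁻¹' Ioo a b) := by
  have hnhds : re ⁻¹' Ioo a b ∈ 𝓝 (0 : ℂ) :=
    (isOpen_Ioo.preimage continuous_re).mem_nhds (by simpa using ⟨ha, hb⟩)
  exact ⟨(differentiableOn_dslope hnhds).2 hf.differentiableOn,
    (continuousOn_dslope (mem_of_superset hnhds subset_closure)).2
      ⟨hf.continuousOn, hf.differentiableOn.differentiableAt hnhds⟩⟩

theorem integral_vertical_inv_smul [CompleteSpace E] {x : ℝ} (hx : x ≠ 0)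
    (hcont : Continuous fun t : ℝ ↦ dslope f 0 (x + t * I)) (T : ℝ) :
    ∫ t in -T..T, (x + t * I : ℂ)⁻¹ • f (x + t * I) =
      (∫ t in -T..T, dslope f 0 (x + t * I)) + (∫ t in -T..T, (x + t * I : ℂ)⁻¹) • f 0 := by
  have hinv : Continuous fun t : ℝ ↦ (x + t * I : ℂ)⁻¹ • f 0 :=
    (continuous_vertical_line_inv hx).smul continuous_const
  rw [← intervalIntegral.integral_smul_const, ← intervalIntegral.integral_add
    (hcont.intervalIntegrable _ _) (hinv.intervalIntegrable _ _)]
  refine intervalIntegral.integral_congr fun t _ ↦ ?_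
  simp only [dslope_of_ne _ (add_mul_I_ne_zero hx t), slope_def_module, sub_zero, smul_sub,
    sub_add_cancel]

theorem tendsto_integral_vertical_inv_smul_sub [CompleteSpace E] (ha : a < 0) (hb : 0 < b)
    (hf : DiffContOnCl ℂ f (re ⁻¹' Ioo a b)) (hlim : f =o[stripAtInfty a b] id) :
    Tendsto (fun T : ℝ ↦ (∫ t in -T..T, (b + t * I : ℂ)⁻¹ • f (b + t * I)) -
      ∫ t in -T..T, (a + t * I : ℂ)⁻¹ • f (a + t * I)) atTop (𝓝 ((2 * π) • f 0)) := by
  have hab : a < b := ha.trans hb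
  have hslope := diffContOnCl_dslope_strip hf ha hb
  have hcont : ContinuousOn (dslope f 0) (re ⁻¹' Icc a b) := by
    simpa only [closure_preimage_re, closure_Ioo hab.ne] using hslope.continuousOn
  simp_rw [integral_vertical_inv_smul hb.ne'
      (continuous_vertical_line hcont (right_mem_Icc.2 hab.le)),
    integral_vertical_inv_smul ha.ne (continuous_vertical_line hcont (left_mem_Icc.2 hab.le)),
    add_sub_add_comm, ← sub_smul]
  have hpi :=
    (tendsto_integral_vertical_inv_of_pos hb).sub (tendsto_integral_vertical_inv_of_neg ha)
  rw [sub_neg_eq_add, ← two_mul, ← ofReal_ofNat, ← ofReal_mul] at hpi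
  simpa only [zero_add, coe_smul] using
    (tendsto_integral_vertical_sub_zero hab hslope (tendsto_dslope_stripAtInfty hlim)).add
      (hpi.smul_const (f 0))

theorem integral_vertical_inv_smul_sub [CompleteSpace E] (ha : a < 0) (hb : 0 < b)
    (hf : DiffContOnCl ℂ f (re ⁻¹' Ioo a b)) (hlim : f =o[stripAtInfty a b] id)
    (hfa : VerticalIntegrable (fun u ↦ u⁻¹ • f u) a)
    (hfb : VerticalIntegrable (fun u ↦ u⁻¹ • f u) b) :
    (∫ t : ℝ, (b + t * I : ℂ)⁻¹ • f (b + t * I)) - ∫ t : ℝ, (a + t * I : ℂ)⁻¹ • f (a + t * I) =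
      (2 * π) • f 0 :=
  tendsto_nhds_unique
    ((intervalIntegral_tendsto_integral hfb tendsto_neg_atTop_atBot tendsto_id).sub
      (intervalIntegral_tendsto_integral hfa tendsto_neg_atTop_atBot tendsto_id))
    (tendsto_integral_vertical_inv_smul_sub ha hb hf hlim)

end Residue

section MellinInv

variable {E : Type*} [NormedAddCommGroup E] [NormedSpace ℂ E] {f : ℂ → E} {σ x : ℝ}

theorem mellinInv_neg_left (hx : 0 ≤ x) :
    mellinInv (-σ) f x = mellinInv σ (fun u ↦ f (-u)) x⁻¹ := by
  have harg : arg x ≠ π := by simpa only [arg_ofReal_of_nonneg hx] using Real.pi_ne_zero.symm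
  rw [mellinInv, mellinInv, ← integral_neg_eq_self]
  congr 2 with t
  have hneg : ((-σ : ℝ) + (-t : ℝ) * I : ℂ) = -(σ + t * I) := by push_cast; ring
  rw [hneg, neg_neg, ofReal_inv, inv_cpow _ _ harg, cpow_neg, inv_inv]

theorem isBigO_cpow_neg_strip {a b : ℝ} (hx : 0 < x) :
    (fun u : ℂ ↦ (x : ℂ) ^ (-u)) =O[𝓟 (re ⁻¹' Icc a b)] fun _ ↦ (1 : ℝ) := by
  obtain ⟨K, hK⟩ := isCompact_Icc.exists_bound_of_continuousOn (s := Icc a b)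
    ((Real.continuous_const_rpow hx.ne').comp continuous_neg).continuousOn
  refine isBigO_principal.2 ⟨K, fun u hu ↦ ?_⟩
  rw [norm_cpow_eq_rpow_re_of_pos hx, neg_re, norm_one, mul_one]
  exact (le_abs_self _).trans (hK u.re hu)

theorem verticalIntegrable_cpow_neg_smul (hx : 0 < x) (hf : VerticalIntegrable f σ) :
    VerticalIntegrable (fun u ↦ (x : ℂ) ^ (-u) • f u) σ := by
  have hcont : Continuous fun t : ℝ ↦ (x : ℂ) ^ (-(σ + t * I) : ℂ) :=
    Continuous.const_cpow (by fun_prop) (.inl (ofReal_ne_zero.2 hx.ne'))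
  refine Integrable.bdd_smul (C := x ^ (-σ)) hf hcont.aestronglyMeasurable
    (Eventually.of_forall fun t ↦ ?_)
  rw [norm_cpow_eq_rpow_re_of_pos hx]
  simp

theorem mellinInv_inv_smul_sub [CompleteSpace E] {a b : ℝ} (ha : a < 0) (hb : 0 < b) (hx : 0 < x)
    (hf : DiffContOnCl ℂ f (re ⁻¹' Ioo a b)) (hlim : f =o[stripAtInfty a b] id)
    (hfa : VerticalIntegrable (fun u ↦ u⁻¹ • f u) a)
    (hfb : VerticalIntegrable (fun u ↦ u⁻¹ • f u) b) :
    mellinInv b (fun u ↦ u⁻¹ • f u) x - mellinInv a (fun u ↦ u⁻¹ • f u) x = f 0 := by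
  have hx₀ : (x : ℂ) ≠ 0 := ofReal_ne_zero.2 hx.ne'
  have hpow : Differentiable ℂ fun u : ℂ ↦ (x : ℂ) ^ (-u) :=
    differentiable_id.neg.const_cpow (.inl hx₀)
  have hlim' : (fun u ↦ (x : ℂ) ^ (-u) • f u) =o[stripAtInfty a b] id := by
    simpa only [one_smul] using ((isBigO_cpow_neg_strip hx).mono inf_le_right).smul_isLittleO hlim
  have hcomm (u : ℂ) : u⁻¹ • (x : ℂ) ^ (-u) • f u = (x : ℂ) ^ (-u) • u⁻¹ • f u :=
    smul_comm _ _ _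
  have hres := integral_vertical_inv_smul_sub ha hb (hpow.diffContOnCl.smul hf) hlim'
    (by simpa only [hcomm] using verticalIntegrable_cpow_neg_smul hx hfa)
    (by simpa only [hcomm] using verticalIntegrable_cpow_neg_smul hx hfb)
  simp only [hcomm, neg_zero, cpow_zero, one_smul] at hres
  rw [mellinInv, mellinInv, ← smul_sub, hres, smul_smul, one_div_mul_cancel (by positivity),
    one_smul]

end MellinInv

theorem verticalLineIntegral_eq_mellinInv {Λ G : ℂ → ℂ} {s : ℂ} {Y : ℝ} (hY : 0 ≤ Y) :
    verticalLineIntegral Λ G s Y = mellinInv (3 / 2) (fun u ↦ Λ (s + u) * G u / u) Y⁻¹ := by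
  have harg : arg Y ≠ π := by simpa only [arg_ofReal_of_nonneg hY] using Real.pi_ne_zero.symm
  rw [verticalLineIntegral, mellinInv, real_smul]
  push_cast
  congr 2 with t
  rw [inv_cpow _ _ harg, cpow_neg, inv_inv, smul_eq_mul, add_assoc, mul_assoc, mul_div_assoc]

/-- `Λ'` stands for the completed L-function of the dual object, and zeros of `G` may cancel poles
of `Λ`. -/
theorem approx_functional_equation_contour_identity_general
    {Λ Λ' G : ℂ → ℂ} {s₀ : ℂ} {c X : ℝ} (hc : 0 < c) (hX : 0 < X)
    (hfe : ∀ s, Λ s = Λ' (1 - s)) (hGeven : ∀ u, G (-u) = G u) (hG0 : G 0 = 1)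
    (hd : DiffContOnCl ℂ (fun u ↦ Λ (s₀ + u) * G u) (re ⁻¹' Ioo (-c) c))
    (hlim : (fun u ↦ Λ (s₀ + u) * G u) =o[stripAtInfty (-c) c] id)
    (hleft : VerticalIntegrable (fun u ↦ Λ (s₀ + u) * G u / u) (-c))
    (hright : VerticalIntegrable (fun u ↦ Λ (s₀ + u) * G u / u) c) :
    Λ s₀ = mellinInv c (fun u ↦ Λ (s₀ + u) * G u / u) X⁻¹ +
      mellinInv c (fun u ↦ Λ' (1 - s₀ + u) * G u / u) X := by
  have hdual (u : ℂ) : Λ (s₀ + -u) * G (-u) / -u = -(Λ' (1 - s₀ + u) * G u / u) := by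
    rw [hGeven, hfe, div_neg, show 1 - (s₀ + -u) = 1 - s₀ + u by ring]
  have hshift := mellinInv_inv_smul_sub (neg_neg_of_pos hc) hc (inv_pos.2 hX) hd hlim
    (by simpa only [smul_eq_mul, inv_mul_eq_div] using hleft)
    (by simpa only [smul_eq_mul, inv_mul_eq_div] using hright)
  simp only [smul_eq_mul, inv_mul_eq_div, add_zero, hG0, mul_one] at hshift
  rw [mellinInv_neg_left (inv_nonneg.2 hX.le), inv_inv] at hshift
  simp only [hdual] at hshift
  simpa only [mellinInv, smul_neg, integral_neg, sub_neg_eq_add] using hshift.symm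

/-- approximate functional equation, contour-shift identity: if `Λ` is
entire with `Λ(s) = Λ(1-s)`, `G` is holomorphic and bounded on an open set containing the
strip `|Re u| ≤ 3/2` with `G(-u) = G(u)` and `G(0) = 1`, and the stated integrability and
decay conditions hold, then `Λ(s₀) = I(s₀, X) + I(1-s₀, X⁻¹)`. -/
theorem approx_functional_equation_contour_identity
    (Λ : ℂ → ℂ) (hΛ : Differentiable ℂ Λ) (hfe : ∀ s : ℂ, Λ s = Λ (1 - s))
    (G : ℂ → ℂ) (U : Set ℂ) (hUopen : IsOpen U)
    (hUstrip : {u : ℂ | |u.re| ≤ 3 / 2} ⊆ U)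
    (hGhol : DifferentiableOn ℂ G U)
    (hGbdd : ∃ M : ℝ, ∀ u ∈ U, ‖G u‖ ≤ M)
    (hGeven : ∀ u : ℂ, G (-u) = G u) (hG0 : G 0 = 1)
    (s₀ : ℂ) (X : ℝ) (hX : 0 < X)
    (hint : ∀ σ : ℝ, σ = 3 / 2 ∨ σ = -(3 / 2) →
      Integrable (fun t : ℝ =>
        Λ (s₀ + σ + t * Complex.I) * G (σ + t * Complex.I) / (σ + t * Complex.I)) ∧
      Integrable (fun t : ℝ =>
        Λ (1 - s₀ + σ + t * Complex.I) * G (σ + t * Complex.I) / (σ + t * Complex.I)))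
    (hdecay : Tendsto
      (fun t : ℝ => ⨆ σ ∈ Set.Icc (-(3 / 2) : ℝ) (3 / 2),
        ‖Λ (s₀ + σ + t * Complex.I) * G (σ + t * Complex.I)‖)
      (cocompact ℝ) (nhds 0)) :
    Λ s₀ = verticalLineIntegral Λ G s₀ X +
      verticalLineIntegral Λ G (1 - s₀) X⁻¹ := by
  have hd : DifferentiableOn ℂ (fun u ↦ Λ (s₀ + u) * G u) (re ⁻¹' Icc (-(3 / 2)) (3 / 2)) :=
    (hΛ.comp (differentiable_id.const_add s₀)).differentiableOn.mul
      (hGhol.mono fun _ hu ↦ hUstrip (abs_le.2 hu))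
  have hlim := isLittleO_id_of_tendsto_zero <|
    tendsto_stripAtInfty_of_tendsto_biSup hd.continuousOn (by simpa only [add_assoc] using hdecay)
  rw [verticalLineIntegral_eq_mellinInv hX.le,
    verticalLineIntegral_eq_mellinInv (inv_nonneg.2 hX.le), inv_inv]
  exact approx_functional_equation_contour_identity_general (by norm_num) hX hfe hGeven hG0
    (DifferentiableOn.diffContOnCl (by rwa [closure_preimage_re, closure_Ioo (by norm_num)])) hlim
    (by simpa only [VerticalIntegrable, add_assoc] using (hint _ (.inr rfl)).1)
    (by simpa only [VerticalIntegrable, add_assoc] using (hint _ (.inl rfl)).1)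
end
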